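/- For all integers k ≥ 2 and n ≥ 1, the k-uniform expansion K^{(k)}_{n,n} of the complete bipartite graph K_{n,n} is obligatory; that is, every k-uniform hypergraph of chromatic number at least ℵ₁ contains a subhypergraph isomorphic to K^{(k)}_{n,n}. -/

import Mathlib

open Cardinal

universe u

/-- A colouring `f` of the vertices is proper for the edge set `E` if no edge
is monochromatic, i.e. every edge contains two vertices of distinct colours. -/
def IsProperColoring {V : Type u} {α : Type*} (E : Set (Set V)) (f : V → α) : Prop :=
  ∀ e ∈ E, ∃ x ∈ e, ∃ y ∈ e, f x ≠ f y

/-- The chromatic number of the hypergraph `(V, E)`: the least cardinal `κ` such that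
there is a proper colouring of the vertices with `κ` colours. -/
noncomputable def chromaticNumber (V : Type u) (E : Set (Set V)) : Cardinal.{u} :=
  sInf { κ : Cardinal.{u} | ∃ (α : Type u) (f : V → α), #α = κ ∧ IsProperColoring E f }

/-- `(V, E)` contains a subhypergraph isomorphic to the `k`-uniform expansion
`K^{(k)}_{n,n}` of the complete bipartite graph `K_{n,n}`: there are distinct
vertices `x i` and `y j` and an edge `e i j ⊇ {x i, y j}` for every pair `(i, j)`,
such that two distinct such edges intersect exactly in the corresponding
intersection of the underlying graph edges. -/
def ContainsExpansionKnn (k n : ℕ) {V : Type u} (E : Set (Set V)) : Prop :=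
  ∃ (x y : Fin n → V) (e : Fin n → Fin n → Set V),
    Function.Injective (Sum.elim x y) ∧
    (∀ i j, e i j ∈ E) ∧
    (∀ i j, x i ∈ e i j ∧ y j ∈ e i j) ∧
    ∀ i j i' j', (i, j) ≠ (i', j') →
      e i j ∩ e i' j' = ({x i, y j} : Set V) ∩ {x i', y j'}

/-!
Call a set `T` of at least two vertices rich if no bounded number of vertices outside `T` meets all
the edges through `T`. The idea is to replace the edges by the inclusion-minimal rich sets. If a set
`S` of at least two vertices is rich, then the only minimal rich set that can contain it is `S`
itself; otherwise each minimal rich set containing `S` also contains one of boundedly many further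
vertices, namely those that block the edges through `S`. Branching over these vertices shows that
the minimal rich sets through two given vertices cover a bounded number of vertices.

Edges are rich, so every edge contains a minimal rich set. Hence the graph that joins two vertices
when they lie in a common minimal rich set has uncountable chromatic number, and by a theorem of
Erdős and Hajnal some `N` vertices have uncountably many common neighbours in it, for `N` as large
as we like. As minimal rich sets are few through any two vertices, the resulting complete bipartite
graph can be thinned out to an expansion of `K_{n,n}` whose edges are minimal rich sets. By richness
these extend one after the other to edges of the hypergraph without meeting in any new vertex.
-/

section Closure

variable {V : Type u}

open FirstOrder.Language

/-- The first-order language with a function symbol of every arity for each natural number. It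
makes Mathlib's substructures available as sets closed under countably many finitary operations. -/
def operationLanguage : FirstOrder.Language.{0, 0} :=
  ⟨fun _ => ℕ, fun _ => Empty⟩

open Classical in
/-- The structure in which the `i`-th function symbol sends a tuple with set of entries `S` to
`f S i`. -/
noncomputable abbrev operationStructure (f : Finset V → ℕ → V) : operationLanguage.Structure V where
  funMap i s := f (Finset.univ.image s) i
  RelMap r := r.elim

/-- The closure operator whose closed sets `A` are those that contain every `f S i` with `S ⊆ A`. -/
noncomputable def operationClosure (f : Finset V → ℕ → V) : ClosureOperator (Set V) :=
  letI := operationStructure f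
  (Substructure.closure operationLanguage).closureOperator

lemma range_subset_operationClosure {f : Finset V → ℕ → V} {A : Set V} {S : Finset V}
    (hS : ↑S ⊆ operationClosure f A) : Set.range (f S) ⊆ operationClosure f A := by
  classical
  let _ := operationStructure f
  rintro _ ⟨i, rfl⟩
  have himage : Finset.univ.image (fun j => (S.equivFin.symm j : V)) = S := by
    ext v
    simpa using ⟨fun ⟨j, hj⟩ => hj ▸ (S.equivFin.symm j).2, fun hv => ⟨S.equivFin ⟨v, hv⟩, by simp⟩⟩
  have hmem : f (Finset.univ.image fun j => (S.equivFin.symm j : V)) i ∈ operationClosure f A :=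
    (Substructure.closure operationLanguage A).fun_mem (n := S.card) i
      (fun j => S.equivFin.symm j) fun j => hS (S.equivFin.symm j).2
  rwa [himage] at hmem

lemma mk_operationClosure_le (f : Finset V → ℕ → V) (A : Set V) :
    #(operationClosure f A) ≤ max ℵ₀ #A := by
  let _ := operationStructure f
  have hsymbols : #(Σ n, operationLanguage.Functions n) = ℵ₀ := by
    simp [operationLanguage]
  have hle := Substructure.lift_card_closure_le (L := operationLanguage) (s := A)
  rw [hsymbols, lift_id'.{0, u}, lift_id'.{0, u}, lift_aleph0] at hle
  refine hle.trans (max_le (le_max_left _ _) (add_le_of_le ?_ (le_max_right _ _) (le_max_left _ _)))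
  exact le_max_left _ _

lemma exists_closed_filtration (f : Finset V → ℕ → V) {W : Set V} (hW : ℵ₀ < #W) :
    ∃ C : (#W).ord.ToType → Set V, Monotone C ∧ W ⊆ ⋃ i, C i ∧ (∀ i, #(C i) < #W) ∧
      ∀ i (S : Finset V), ↑S ⊆ C i → Set.range (f S) ⊆ C i := by
  obtain ⟨w⟩ : Nonempty ((#W).ord.ToType ≃ W) := Cardinal.eq.1 (by simp)
  refine ⟨fun i => operationClosure f ((fun j => (w j : V)) '' Set.Iic i), fun i j hij => ?_,
    fun v hv => ?_, fun i => ?_, fun i S hS => range_subset_operationClosure hS⟩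
  · exact (operationClosure f).monotone (Set.image_mono (Set.Iic_subset_Iic.2 hij))
  · exact Set.mem_iUnion.2 ⟨w.symm ⟨v, hv⟩,
      (operationClosure f).le_closure _ ⟨w.symm ⟨v, hv⟩, Set.self_mem_Iic, by simp⟩⟩
  · have hIic : #(Set.Iic i) < #W := by
      simpa using mk_Iic_lt i (by simp) (by simpa using hW.le)
    exact (mk_operationClosure_le f _).trans_lt (max_lt hW (mk_image_le.trans_lt hIic))

end Closure

section ColouringNumber

variable {V : Type u} {G : SimpleGraph V} {W : Set V}

/-- The set of vertices adjacent to all vertices of `S`. -/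
def commonNeighborSet (G : SimpleGraph V) (S : Finset V) : Set V :=
  {v | ∀ s ∈ S, G.Adj v s}

/-- The ends of every edge of `G` inside `W` are comparable in a well-founded relation in which
every vertex of `W` has only finitely many smaller neighbours in `W`. In other words, the colouring
number of the subgraph induced on `W` is at most `ℵ₀`. -/
def HasFiniteBackDegree (G : SimpleGraph V) (W : Set V) : Prop :=
  ∃ R : V → V → Prop, WellFounded R ∧ (∀ v ∈ W, ∀ w ∈ W, G.Adj v w → R v w ∨ R w v) ∧
    ∀ v ∈ W, {w ∈ W | G.Adj w v ∧ R w v}.Finite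

lemma HasFiniteBackDegree.mono {W' : Set V} (h : HasFiniteBackDegree G W') (hW : W ⊆ W') :
    HasFiniteBackDegree G W := by
  obtain ⟨R, hwf, hcomp, hfin⟩ := h
  exact ⟨R, hwf, fun v hv w hw => hcomp v (hW hv) w (hW hw),
    fun v hv => (hfin v (hW hv)).subset fun w hw => ⟨hW hw.1, hw.2⟩⟩

lemma hasFiniteBackDegree_of_countable (G : SimpleGraph V) (hW : W.Countable) :
    HasFiniteBackDegree G W := by
  obtain ⟨f, hf⟩ := Set.countable_iff_exists_injOn.1 hW
  refine ⟨fun v w => f v < f w, (measure f).wf,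
    fun v hv w hw h => lt_or_gt_of_ne (hf.ne hv hw h.ne), fun v _ => ?_⟩
  refine Set.Finite.of_finite_image ((Set.finite_lt_nat (f v)).subset ?_)
    (hf.mono fun w hw => hw.1)
  rintro _ ⟨w, hw, rfl⟩
  exact hw.2.2

lemma hasFiniteBackDegree_of_fibers {ι : Type*} [LinearOrder ι] [WellFoundedLT ι] (a : V → ι)
    (hfib : ∀ i, HasFiniteBackDegree G {v ∈ W | a v = i})
    (hback : ∀ v ∈ W, {w ∈ W | G.Adj w v ∧ a w < a v}.Finite) : HasFiniteBackDegree G W := by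
  choose R hwf hcomp hfin using hfib
  refine ⟨fun w v => a w < a v ∨ a w = a v ∧ R (a v) w v, ?_, fun v hv w hw hvw => ?_,
    fun v hv => ?_⟩
  · refine Subrelation.wf (r := InvImage (PSigma.Lex (· < ·) R) fun v => (⟨a v, v⟩ : Σ' _ : ι, V))
      ?_ (InvImage.wf _ (WellFounded.psigma_lex wellFounded_lt hwf))
    rintro w v (h | ⟨h, hR⟩)
    · exact PSigma.Lex.left _ _ h
    · simp only [InvImage, h]
      exact PSigma.Lex.right _ hR
  · rcases lt_trichotomy (a v) (a w) with h | h | h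
    · exact Or.inl (Or.inl h)
    · exact (hcomp (a w) v ⟨hv, h⟩ w ⟨hw, rfl⟩ hvw).imp (fun hR => Or.inr ⟨h, hR⟩)
        fun hR => Or.inr ⟨h.symm, h ▸ hR⟩
    · exact Or.inr (Or.inl h)
  · refine ((hback v hv).union (hfin (a v) v ⟨hv, rfl⟩)).subset ?_
    rintro w ⟨hw, hadj, h | ⟨h, hR⟩⟩
    · exact Or.inl ⟨hw, hadj, h⟩
    · exact Or.inr ⟨⟨hw, h⟩, hadj, hR⟩

lemma hasFiniteBackDegree_of_filtration {ι : Type*} [LinearOrder ι] [WellFoundedLT ι]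
    {C : ι → Set V} (hmono : Monotone C) (hcover : W ⊆ ⋃ i, C i)
    (hC : ∀ i, HasFiniteBackDegree G (C i)) (N : ℕ)
    (hclosed : ∀ i (S : Finset V), S.card = N → ↑S ⊆ C i → commonNeighborSet G S ⊆ C i) :
    HasFiniteBackDegree G W := by
  have hfirst : ∀ v ∈ W, ∃ i, v ∈ C i ∧ ∀ j < i, v ∉ C j := fun v hv => by
    obtain ⟨i, hi, hmin⟩ := wellFounded_lt.has_min {i | v ∈ C i} (Set.mem_iUnion.1 (hcover hv))
    exact ⟨i, hi, fun j hj hvj => hmin j hvj hj⟩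
  obtain rfl | ⟨v₀, hv₀⟩ := W.eq_empty_or_nonempty
  · exact hasFiniteBackDegree_of_countable G Set.countable_empty
  have : Nonempty ι := ⟨(hfirst v₀ hv₀).choose⟩
  choose! a ha hmin using hfirst
  refine hasFiniteBackDegree_of_fibers a (fun i => (hC i).mono ?_) fun v hv => ?_
  · rintro v ⟨hv, rfl⟩
    exact ha v hv
  -- If `v` had `N` neighbours in earlier layers, then closedness would put `v` itself there.
  · by_contra hinf
    obtain ⟨S, hS, hSN⟩ := Set.Infinite.exists_subset_card_eq hinf N
    obtain ⟨w, hw⟩ := Set.Infinite.nonempty hinf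
    have : Nonempty (Set.Iio (a v)) := ⟨⟨a w, hw.2.2⟩⟩
    obtain ⟨i, hi⟩ := Directed.exists_mem_subset_of_finset_subset_biUnion
      (f := fun i : Set.Iio (a v) => C i) (s := S) (Monotone.directed_le fun i j h => hmono h)
      fun x hx => Set.mem_iUnion.2 ⟨⟨a x, (hS hx).2.2⟩, ha x (hS hx).1⟩
    exact hmin v hv i i.2 (hclosed i S hSN hi fun s hs => (hS hs).2.1.symm)

lemma hasFiniteBackDegree_of_countable_commonNeighborSet (N : ℕ)
    (hG : ∀ S : Finset V, S.card = N → (commonNeighborSet G S).Countable) (W : Set V) :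
    HasFiniteBackDegree G W := by
  induction hκ : #W using WellFoundedLT.induction generalizing W with
  | ind κ ih =>
    subst hκ
    rcases le_or_gt #W ℵ₀ with hW | hW
    · exact hasFiniteBackDegree_of_countable G (le_aleph0_iff_set_countable.1 hW)
    have : Nonempty V := (mk_ne_zero_iff.1 (aleph0_pos.trans hW).ne').map Subtype.val
    have henum : ∀ S : Finset V, S.card = N → ∃ f : ℕ → V, commonNeighborSet G S ⊆ Set.range f :=
      fun S hS => Set.countable_iff_exists_subset_range.1 (hG S hS)
    choose! f hf using henum
    obtain ⟨C, hmono, hcover, hcard, hclosed⟩ := exists_closed_filtration f hW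
    exact hasFiniteBackDegree_of_filtration hmono hcover (fun i => ih _ (hcard i) _ rfl) N
      fun i S hSN hS => (hf S hSN).trans (hclosed i S hS)

lemma HasFiniteBackDegree.nonempty_coloring_nat (h : HasFiniteBackDegree G Set.univ) :
    Nonempty (G.Coloring ℕ) := by
  obtain ⟨R, hwf, hcomp, hfin⟩ := h
  have hfree : ∀ v (c : ∀ w, R w v → ℕ), ∃ m, ∀ w hw, G.Adj w v → c w hw ≠ m := fun v c => by
    have : Finite {w | G.Adj w v ∧ R w v} := (by simpa using hfin v trivial : Set.Finite _)
    obtain ⟨m, hm⟩ := (Set.finite_range fun w : {w | G.Adj w v ∧ R w v} => c w w.2.2).exists_notMem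
    exact ⟨m, fun w hw hadj e => hm ⟨⟨w, hadj, hw⟩, e⟩⟩
  choose greedy hgreedy using hfree
  have hne : ∀ v w, R w v → G.Adj w v → hwf.fix greedy w ≠ hwf.fix greedy v := fun v w hR hadj => by
    rw [hwf.fix_eq greedy v]
    exact hgreedy v (fun w _ => hwf.fix greedy w) w hR hadj
  exact ⟨SimpleGraph.Coloring.mk (hwf.fix greedy) fun {v w} hadj =>
    (hcomp v trivial w trivial hadj).elim (fun hR => hne w v hR hadj)
      fun hR => (hne v w hR hadj.symm).symm⟩

/-- A theorem of Erdős and Hajnal. -/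
theorem exists_uncountable_commonNeighborSet (hG : IsEmpty (G.Coloring ℕ)) (N : ℕ) :
    ∃ S : Finset V, S.card = N ∧ ¬ (commonNeighborSet G S).Countable := by
  by_contra! hcount
  exact not_isEmpty_iff.2 (hasFiniteBackDegree_of_countable_commonNeighborSet N hcount
    Set.univ).nonempty_coloring_nat hG

end ColouringNumber

section Rich

variable {V : Type*}

/-- The vertices covered by the edges of `F` that contain `S`. -/
def starVertices (F : Set (Finset V)) (S : Finset V) : Set V :=
  {v | ∃ e ∈ F, S ⊆ e ∧ v ∈ e}

variable [DecidableEq V] {F : Set (Finset V)} {L k : ℕ} {S T : Finset V}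

/-- No `L` vertices outside `T` meet all the edges of `F` that contain `T`. -/
def IsRich (F : Set (Finset V)) (L : ℕ) (T : Finset V) : Prop :=
  ∀ X : Finset V, X.card ≤ L → ∃ e ∈ F, T ⊆ e ∧ e ∩ X ⊆ T

/-- The inclusion-minimal ones among the rich sets with at least two elements. They replace the
edges of `F` and, unlike these, are few through any two vertices. -/
def minimalRich (F : Set (Finset V)) (L : ℕ) : Set (Finset V) :=
  {T | Minimal (fun S => 2 ≤ S.card ∧ IsRich F L S) T}

lemma mem_minimalRich :
    T ∈ minimalRich F L ↔ Minimal (fun S => 2 ≤ S.card ∧ IsRich F L S) T :=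
  Iff.rfl

lemma isRich_of_mem (hT : T ∈ F) : IsRich F L T :=
  fun _ _ => ⟨T, hT, subset_rfl, Finset.inter_subset_left⟩

lemma IsRich.card_le (hF : ∀ e ∈ F, e.card ≤ k) (hT : IsRich F L T) : T.card ≤ k := by
  obtain ⟨e, he, hTe, -⟩ := hT ∅ (by simp)
  exact (Finset.card_le_card hTe).trans (hF e he)

lemma isRich_of_mem_minimalRich (hT : T ∈ minimalRich F L) : IsRich F L T :=
  (mem_minimalRich.1 hT).prop.2

lemma exists_minimalRich_subset (hT : T ∈ F) (h2 : 2 ≤ T.card) : ∃ S ∈ minimalRich F L, S ⊆ T := by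
  obtain ⟨S, hST, hS⟩ := exists_minimal_le_of_wellFoundedLT
    (fun S : Finset V => 2 ≤ S.card ∧ IsRich F L S) T ⟨h2, isRich_of_mem hT⟩
  exact ⟨S, hS, hST⟩

lemma starVertices_minimalRich_subset_of_isRich (h2 : 2 ≤ S.card) (hS : IsRich F L S) :
    starVertices (minimalRich F L) S ⊆ S := by
  rintro v ⟨T, hT, hST, hv⟩
  exact (mem_minimalRich.1 hT).le_of_le ⟨h2, hS⟩ hST hv

lemma exists_starVertices_minimalRich_subset_biUnion_insert (hS : ¬ IsRich F L S) :
    ∃ X : Finset V, X.card ≤ L ∧ Disjoint X S ∧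
      starVertices (minimalRich F L) S ⊆ ⋃ x ∈ X, starVertices (minimalRich F L) (insert x S) := by
  simp only [IsRich, not_forall] at hS
  obtain ⟨X, hXL, hX⟩ := hS
  refine ⟨X \ S, (Finset.card_le_card Finset.sdiff_subset).trans hXL, Finset.sdiff_disjoint, ?_⟩
  rintro v ⟨T, hT, hST, hv⟩
  obtain ⟨e, he, hTe, heX⟩ := isRich_of_mem_minimalRich hT X hXL
  obtain ⟨x, hx, hxS⟩ : ∃ x ∈ e ∩ X, x ∉ S :=
    Finset.not_subset.1 fun h => hX ⟨e, he, hST.trans hTe, h⟩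
  simp only [Set.mem_iUnion]
  exact ⟨x, Finset.mem_sdiff.2 ⟨(Finset.mem_inter.1 hx).2, hxS⟩, T, hT,
    Finset.insert_subset (heX hx) hST, hv⟩

lemma encard_starVertices_minimalRich_le (hF : ∀ e ∈ F, e.card ≤ k) (d : ℕ) (h2 : 2 ≤ S.card)
    (hd : k < S.card + d) : (starVertices (minimalRich F L) S).encard ≤ ↑((L + 1) ^ d * k) := by
  induction d generalizing S with
  | zero =>
    have hempty : starVertices (minimalRich F L) S = ∅ := by
      refine Set.eq_empty_of_forall_notMem ?_
      rintro v ⟨T, hT, hST, -⟩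
      have := (isRich_of_mem_minimalRich hT).card_le hF
      have := Finset.card_le_card hST
      omega
    simp [hempty]
  | succ d ih =>
    by_cases hS : IsRich F L S
    · calc (starVertices (minimalRich F L) S).encard
          ≤ (S : Set V).encard := Set.encard_mono (starVertices_minimalRich_subset_of_isRich h2 hS)
        _ = ↑S.card := Set.encard_coe_eq_coe_finsetCard S
        _ ≤ ↑((L + 1) ^ (d + 1) * k) :=
          mod_cast (hS.card_le hF).trans (Nat.le_mul_of_pos_left k (by positivity))
    · obtain ⟨X, hXL, hXS, hstar⟩ := exists_starVertices_minimalRich_subset_biUnion_insert hS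
      have hinsert : ∀ x ∈ X, (starVertices (minimalRich F L) (insert x S)).encard ≤
          ↑((L + 1) ^ d * k) := fun x hx => by
        have hcard := Finset.card_insert_of_notMem (Finset.disjoint_left.1 hXS hx)
        exact ih (by omega) (by omega)
      calc (starVertices (minimalRich F L) S).encard
          ≤ (⋃ x ∈ X, starVertices (minimalRich F L) (insert x S)).encard := Set.encard_mono hstar
        _ ≤ ∑ x ∈ X, (starVertices (minimalRich F L) (insert x S)).encard :=
          X.set_encard_biUnion_le _
        _ ≤ X.card • (↑((L + 1) ^ d * k) : ℕ∞) := Finset.sum_le_card_nsmul _ _ _ hinsert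
        _ = ↑(X.card * ((L + 1) ^ d * k)) := by simp
        _ ≤ ↑((L + 1) * ((L + 1) ^ d * k)) :=
          mod_cast Nat.mul_le_mul_right _ (hXL.trans L.le_succ)
        _ = ↑((L + 1) ^ (d + 1) * k) := by rw [pow_succ', mul_assoc]

lemma exists_extension_of_isRich (hF : ∀ e ∈ F, e.card ≤ k) {I : Type*} [Fintype I]
    (hL : Fintype.card I * k ≤ L) {T : I → Finset V} (hT : ∀ i, IsRich F L (T i)) :
    ∃ e : I → Finset V, (∀ i, e i ∈ F) ∧ (∀ i, T i ⊆ e i) ∧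
      Pairwise fun i j => e i ∩ e j ⊆ T i ∩ T j := by
  classical
  suffices h : ∀ s : Finset I, ∃ e : I → Finset V, (∀ i ∈ s, e i ∈ F) ∧ (∀ i, (e i).card ≤ k) ∧
      (∀ i, T i ⊆ e i) ∧ Pairwise fun i j => e i ∩ e j ⊆ T i ∩ T j by
    obtain ⟨e, heF, -, hTe, hinter⟩ := h Finset.univ
    exact ⟨e, fun i => heF i (Finset.mem_univ i), hTe, hinter⟩
  intro s
  induction s using Finset.induction_on with
  | empty =>
    exact ⟨T, by simp, fun i => (hT i).card_le hF, fun _ => subset_rfl, fun _ _ _ => subset_rfl⟩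
  | insert a s _ ih =>
    obtain ⟨e, heF, hek, hTe, hinter⟩ := ih
    obtain ⟨e', he', hTe', heX⟩ := hT a (Finset.univ.biUnion e)
      ((Finset.card_biUnion_le_card_mul _ _ k fun i _ => hek i).trans hL)
    have hnew : ∀ i, i ≠ a → e' ∩ e i ⊆ T a ∩ T i := fun i hi v hv => by
      obtain ⟨hv', hvi⟩ := Finset.mem_inter.1 hv
      have hva : v ∈ T a :=
        heX (Finset.mem_inter.2 ⟨hv', Finset.mem_biUnion.2 ⟨i, Finset.mem_univ i, hvi⟩⟩)
      exact hinter hi.symm (Finset.mem_inter.2 ⟨hTe a hva, hvi⟩)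
    refine ⟨Function.update e a e',
      (Function.forall_update_iff e fun i f => i ∈ insert a s → f ∈ F).2
        ⟨fun _ => he', fun i hi his => heF i (Finset.mem_of_mem_insert_of_ne his hi)⟩,
      (Function.forall_update_iff e fun _ f => f.card ≤ k).2 ⟨hF e' he', fun i _ => hek i⟩,
      (Function.forall_update_iff e fun i f => T i ⊆ f).2 ⟨hTe', fun i _ => hTe i⟩,
      fun i j hij => ?_⟩
    rcases eq_or_ne i a with rfl | hi
    · simpa [hij.symm] using hnew j hij.symm
    · rcases eq_or_ne j a with rfl | hj
      · simpa [hi, Finset.inter_comm] using hnew i hi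
      · simpa [hi, hj] using hinter hij

end Rich

section Shadow

variable {V : Type u} {F : Set (Finset V)}

/-- The graph whose edges are the pairs of distinct vertices that lie in a common member of `F`. -/
def shadowGraph (F : Set (Finset V)) : SimpleGraph V where
  Adj x y := x ≠ y ∧ ∃ e ∈ F, x ∈ e ∧ y ∈ e
  symm := ⟨fun _ _ ⟨hne, e, he, hx, hy⟩ => ⟨hne.symm, e, he, hy, hx⟩⟩
  loopless := ⟨fun _ h => h.1 rfl⟩

lemma isProperColoring_of_shadowGraph_coloring {α : Type*} {E : Set (Set V)}
    (hE : ∀ e ∈ E, ∃ T ∈ F, 2 ≤ T.card ∧ ↑T ⊆ e) (f : (shadowGraph F).Coloring α) :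
    IsProperColoring E f := fun e he => by
  obtain ⟨T, hT, h2, hTe⟩ := hE e he
  obtain ⟨x, hx, y, hy, hxy⟩ := Finset.one_lt_card.1 h2
  exact ⟨x, hTe hx, y, hTe hy, f.valid ⟨hxy, T, hT, hx, hy⟩⟩

end Shadow

section Expansion

lemma exists_pairwiseDisjoint_subset {ι α : Type*} [DecidableEq α] {A : ι → Finset α}
    {X : Finset ι} {c d : ℕ} (hne : ∀ i ∈ X, (A i).Nonempty) (hc : ∀ i ∈ X, (A i).card ≤ c)
    (hd : ∀ i ∈ X, ∀ a ∈ A i, {j ∈ X | a ∈ A j}.card ≤ d) :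
    ∃ I ⊆ X, (I : Set ι).PairwiseDisjoint A ∧ X.card ≤ I.card * (c * d) := by
  classical
  obtain ⟨I, hI⟩ := Finset.exists_maximal
    (s := X.powerset.filter fun I : Finset ι => (I : Set ι).PairwiseDisjoint A) ⟨∅, by simp⟩
  obtain ⟨hIX, hdisj⟩ : I ⊆ X ∧ (I : Set ι).PairwiseDisjoint A := by simpa using hI.prop
  have hmeets : X ⊆ I.biUnion fun i => (A i).biUnion fun a => {j ∈ X | a ∈ A j} := fun j hj => by
    by_contra hcon
    have hjI : ∀ i ∈ I, Disjoint (A j) (A i) := fun i hi => Finset.disjoint_left.2 fun a haj hai =>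
      hcon (Finset.mem_biUnion.2 ⟨i, hi, Finset.mem_biUnion.2 ⟨a, hai, by simp [hj, haj]⟩⟩)
    have hinsert : insert j I ⊆ I := hI.le_of_ge (by
      simp only [Finset.mem_filter, Finset.mem_powerset, Finset.coe_insert]
      exact ⟨Finset.insert_subset hj hIX,
        (Set.pairwiseDisjoint_insert.2 ⟨hdisj, fun i hi _ => hjI i hi⟩)⟩) (Finset.subset_insert j I)
    exact (hne j hj).ne_empty (disjoint_self.1 (hjI j (hinsert (Finset.mem_insert_self j I))))
  refine ⟨I, hIX, hdisj, (Finset.card_le_card hmeets).trans ?_⟩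
  refine Finset.card_biUnion_le_card_mul _ _ _ fun i hi => ?_
  exact (Finset.card_biUnion_le_card_mul _ _ _ (hd i (hIX hi))).trans
    (Nat.mul_le_mul_right d (hc i (hIX hi)))

variable {V : Type u} [DecidableEq V] {F : Set (Finset V)} {c k n : ℕ} {X : Finset V} {Y : Set V}
  {e : V → V → Finset V}

lemma containsExpansionKnn_image_coe_iff :
    ContainsExpansionKnn k n ((↑) '' F : Set (Set V)) ↔
      ∃ (x y : Fin n → V) (T : Fin n × Fin n → Finset V), Function.Injective (Sum.elim x y) ∧
        (∀ p, T p ∈ F) ∧ (∀ p, x p.1 ∈ T p ∧ y p.2 ∈ T p) ∧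
        Pairwise fun p q => T p ∩ T q ⊆ {x p.1, y p.2} ∩ {x q.1, y q.2} := by
  constructor
  · rintro ⟨x, y, e, hinj, he, hxy, hinter⟩
    choose T hTF hTe using he
    obtain rfl : (fun i j => (T i j : Set V)) = e := funext₂ hTe
    refine ⟨x, y, fun p => T p.1 p.2, hinj, fun p => hTF p.1 p.2, fun p => hxy p.1 p.2,
      fun p q hpq => ?_⟩
    change T p.1 p.2 ∩ T q.1 q.2 ⊆ {x p.1, y p.2} ∩ {x q.1, y q.2}
    rw [← Finset.coe_subset]
    push_cast
    exact (hinter p.1 p.2 q.1 q.2 hpq).subset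
  · rintro ⟨x, y, T, hinj, hTF, hxy, hinter⟩
    refine ⟨x, y, fun i j => T (i, j), hinj, fun i j => ⟨_, hTF (i, j), rfl⟩,
      fun i j => hxy (i, j), fun i j i' j' hne => ?_⟩
    have hpair : ∀ p, {x p.1, y p.2} ⊆ T p := fun p => by
      simpa [Finset.insert_subset_iff] using hxy p
    have hinter_eq : T (i, j) ∩ T (i', j') = {x i, y j} ∩ {x i', y j'} :=
      (hinter hne).antisymm (Finset.inter_subset_inter (hpair (i, j)) (hpair (i', j')))
    simpa using congrArg ((↑) : Finset V → Set V) hinter_eq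

lemma containsExpansionKnn_of_isRich {M : Set (Finset V)}
    (hF : ∀ e ∈ F, e.card ≤ k) (hM : ∀ T ∈ M, IsRich F (n * n * k) T)
    (h : ContainsExpansionKnn k n ((↑) '' M : Set (Set V))) :
    ContainsExpansionKnn k n ((↑) '' F : Set (Set V)) := by
  obtain ⟨x, y, T, hinj, hTM, hxy, hinter⟩ := containsExpansionKnn_image_coe_iff.1 h
  obtain ⟨e, heF, hTe, he⟩ := exists_extension_of_isRich hF (by simp) fun p => hM (T p) (hTM p)
  exact containsExpansionKnn_image_coe_iff.2 ⟨x, y, e, hinj, heF,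
    fun p => ⟨hTe p (hxy p).1, hTe p (hxy p).2⟩, fun p q hpq => (he hpq).trans (hinter hpq)⟩

lemma mem_starVertices_pair {e : Finset V} {x y v : V} (he : e ∈ F) (hx : x ∈ e) (hy : y ∈ e)
    (hv : v ∈ e) : v ∈ starVertices F {x, y} :=
  ⟨e, he, by simp [Finset.insert_subset_iff, hx, hy], hv⟩

/-- `e` chooses for all `x ∈ X` and `y ∈ Y` an edge of `F` through both. -/
def IsEdgeChoice (F : Set (Finset V)) (X Y : Set V) (e : V → V → Finset V) : Prop :=
  ∀ x ∈ X, ∀ y ∈ Y, e x y ∈ F ∧ x ∈ e x y ∧ y ∈ e x y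

lemma exists_subset_inter_subset_singleton
    (hF : ∀ x y, x ≠ y → (starVertices F {x, y}).encard ≤ c) (he : IsEdgeChoice F X Y e)
    (hXY : Disjoint ↑X Y) (hX : n * (c * c) < X.card) {y : V} (hy : y ∈ Y) :
    ∃ I ⊆ X, I.card = n ∧ ∀ x ∈ I, ∀ x' ∈ I, x ≠ x' → e x y ∩ e x' y ⊆ {y} := by
  have hcard : ∀ s : Finset V, ∀ v, v ≠ y → ↑s ⊆ starVertices F {v, y} → s.card ≤ c :=
    fun s v hv hs => by
      exact_mod_cast (Set.encard_coe_eq_coe_finsetCard s).symm.trans_le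
        ((Set.encard_mono hs).trans (hF v y hv))
  have hXy : ∀ x ∈ X, x ≠ y := fun x hx => hXY.ne_of_mem hx hy
  obtain ⟨I, hIX, hdisj, hI⟩ := exists_pairwiseDisjoint_subset (A := fun x => (e x y).erase y)
    (X := X) (c := c) (d := c) (fun x hx => ⟨x, Finset.mem_erase.2 ⟨hXy x hx, (he x hx y hy).2.1⟩⟩)
    (fun x hx => hcard _ x (hXy x hx) fun v hv => by
      obtain ⟨heF, hxe, hye⟩ := he x hx y hy
      exact mem_starVertices_pair heF hxe hye (Finset.mem_of_mem_erase hv))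
    (fun _ _ v hv => hcard _ v (Finset.ne_of_mem_erase hv) fun x' hx' => by
      obtain ⟨hx'X, hvx'⟩ := Finset.mem_filter.1 hx'
      obtain ⟨heF, hxe, hye⟩ := he x' hx'X y hy
      exact mem_starVertices_pair heF (Finset.mem_of_mem_erase hvx') hye hxe)
  obtain ⟨J, hJI, hJ⟩ := Finset.exists_subset_card_eq
    (Nat.lt_of_mul_lt_mul_right (hX.trans_le hI)).le
  refine ⟨J, hJI.trans hIX, hJ, fun x hx x' hx' hne v hv => ?_⟩
  obtain ⟨hvx, hvx'⟩ := Finset.mem_inter.1 hv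
  by_contra hvy
  rw [Finset.mem_singleton] at hvy
  exact Finset.disjoint_left.1 (hdisj (hJI hx) (hJI hx') hne) (Finset.mem_erase.2 ⟨hvy, hvx⟩)
    (Finset.mem_erase.2 ⟨hvy, hvx'⟩)

lemma exists_infinite_subset_inter_subset_singleton
    (hF : ∀ x y, x ≠ y → (starVertices F {x, y}).encard ≤ c) (he : IsEdgeChoice F X Y e)
    (hXY : Disjoint ↑X Y) (hX : n * (c * c) < X.card) (hY : Y.Infinite) :
    ∃ I ⊆ X, I.card = n ∧ ∃ Y' ⊆ Y, Y'.Infinite ∧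
      ∀ y ∈ Y', ∀ x ∈ I, ∀ x' ∈ I, x ≠ x' → e x y ∩ e x' y ⊆ {y} := by
  choose! I hIX hIn hI using fun y => exists_subset_inter_subset_singleton hF he hXY hX (y := y)
  have himage : (I '' Y).Finite := X.powerset.finite_toSet.subset (by
    rintro _ ⟨y, hy, rfl⟩
    exact Finset.mem_powerset.2 (hIX y hy))
  obtain ⟨_, ⟨y₀, hy₀, rfl⟩, hinf⟩ : ∃ J ∈ I '' Y, (Y ∩ I ⁻¹' {J}).Infinite := by
    by_contra! hfin
    exact hY (Set.Finite.of_finite_fibers I himage hfin)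
  refine ⟨I y₀, hIX y₀ hy₀, hIn y₀ hy₀, _, Set.inter_subset_left, hinf, ?_⟩
  rintro y ⟨hy, hyI⟩
  exact hyI ▸ hI y hy

lemma exists_seq_inter_subset_singleton
    (hF : ∀ x y, x ≠ y → (starVertices F {x, y}).encard ≤ c) (he : IsEdgeChoice F X Y e)
    (hY : Y.Infinite) :
    ∃ y : ℕ → V, (∀ a, y a ∈ Y) ∧ Function.Injective y ∧
      ∀ a b, a < b → ∀ x ∈ X, ∀ x' ∈ X, e x (y a) ∩ e x' (y b) ⊆ {x'} := by
  have hfinite : ∀ D : Finset V, (⋃ x ∈ X, ⋃ d ∈ D.erase x, starVertices F {x, d}).Finite :=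
    fun D => X.finite_toSet.biUnion fun x _ => (D.erase x).finite_toSet.biUnion fun d hd =>
      Set.finite_of_encard_le_coe (hF x d (Finset.ne_of_mem_erase hd).symm)
  obtain ⟨y, hyY, hlt⟩ := exists_seq_of_forall_finset_exists (· ∈ Y)
    (fun y y' => y ≠ y' ∧ ∀ x ∈ X, ∀ x' ∈ X, e x y ∩ e x' y' ⊆ {x'}) (fun s _ => by
      obtain ⟨y', hy'Y, hy'⟩ := (hY.sdiff ((hfinite (s.biUnion fun y =>
        X.biUnion fun x => e x y)).union s.finite_toSet)).nonempty
      refine ⟨y', hy'Y, fun y hy => ⟨?_, fun x hx x' hx' d hd => ?_⟩⟩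
      · rintro rfl
        exact hy' (Or.inr hy)
      · obtain ⟨hde, hde'⟩ := Finset.mem_inter.1 hd
        obtain ⟨heF, hx'e, hy'e⟩ := he x' hx' y' hy'Y
        by_contra hdx
        refine hy' (Or.inl (Set.mem_biUnion hx' (Set.mem_biUnion (x := d) ?_
          (mem_starVertices_pair heF hx'e hde' hy'e))))
        exact Finset.mem_erase.2 ⟨by simpa using hdx,
          Finset.mem_biUnion.2 ⟨y, hy, Finset.mem_biUnion.2 ⟨x, hx, hde⟩⟩⟩)
  exact ⟨y, hyY, Function.Injective.of_lt_imp_ne fun a b h => (hlt a b h).1,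
    fun a b h => (hlt a b h).2⟩

lemma containsExpansionKnn_of_isEdgeChoice
    (hF : ∀ x y, x ≠ y → (starVertices F {x, y}).encard ≤ c) (he : IsEdgeChoice F X Y e)
    (hXY : Disjoint ↑X Y) (hX : n * (c * c) < X.card) (hY : Y.Infinite) :
    ContainsExpansionKnn k n ((↑) '' F : Set (Set V)) := by
  obtain ⟨I, hIX, hIn, Y', hY'Y, hY', hI⟩ :=
    exists_infinite_subset_inter_subset_singleton hF he hXY hX hY
  have heI : IsEdgeChoice F I Y' e := fun x hx y hy => he x (hIX hx) y (hY'Y hy)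
  obtain ⟨y, hyY', hyinj, hlt⟩ := exists_seq_inter_subset_singleton hF heI hY'
  let x : Fin n → V := fun i => (I.equivFinOfCardEq hIn).symm i
  have hxI : ∀ i, x i ∈ I := fun i => ((I.equivFinOfCardEq hIn).symm i).2
  have hxinj : Function.Injective x :=
    Subtype.val_injective.comp (I.equivFinOfCardEq hIn).symm.injective
  have hxy : ∀ i j, x i ≠ y j := fun i j => hXY.ne_of_mem (hIX (hxI i)) (hY'Y (hyY' j))
  have hedge : ∀ i j, e (x i) (y j) ∈ F ∧ x i ∈ e (x i) (y j) ∧ y j ∈ e (x i) (y j) :=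
    fun i j => heI _ (hxI i) _ (hyY' j)
  have hinter : ∀ i i' (a b : ℕ), a < b →
      e (x i) (y a) ∩ e (x i') (y b) ⊆ {x i, y a} ∩ {x i', y b} := fun i i' a b hab v hv => by
    obtain rfl : v = x i' := by simpa using hlt a b hab _ (hxI i) _ (hxI i') hv
    have hii' : x i = x i' := by
      by_contra hne
      refine hxy i' a (Finset.mem_singleton.1 (hI _ (hyY' a) _ (hxI i) _ (hxI i') hne ?_))
      exact Finset.mem_inter.2 ⟨(Finset.mem_inter.1 hv).1, (hedge i' a).2.1⟩
    simp [hii']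
  refine containsExpansionKnn_image_coe_iff.2 ⟨x, fun j => y j, fun p => e (x p.1) (y p.2),
    hxinj.sumElim (hyinj.comp Fin.val_injective) fun i j => hxy i j,
    fun p => (hedge p.1 p.2).1, fun p => (hedge p.1 p.2).2, fun ⟨i, j⟩ ⟨i', j'⟩ hne => ?_⟩
  rcases lt_trichotomy (j : ℕ) j' with h | h | h
  · exact hinter i i' j j' h
  · obtain rfl := Fin.ext h
    have hii' : x i ≠ x i' := fun h => hne (by rw [hxinj h])
    intro v hv
    obtain rfl : v = y j := by simpa using hI _ (hyY' j) _ (hxI i) _ (hxI i') hii' hv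
    simp
  · rw [Finset.inter_comm, Finset.inter_comm {x i, y j}]
    exact hinter i' i j' j h

lemma containsExpansionKnn_of_infinite_commonNeighborSet
    (hF : ∀ x y, x ≠ y → (starVertices F {x, y}).encard ≤ c) (hX : n * (c * c) < X.card)
    (hY : (commonNeighborSet (shadowGraph F) X).Infinite) :
    ContainsExpansionKnn k n ((↑) '' F : Set (Set V)) := by
  have hedge : ∀ x ∈ X, ∀ y ∈ commonNeighborSet (shadowGraph F) X, ∃ f ∈ F, x ∈ f ∧ y ∈ f :=
    fun x hx y hy => by
      obtain ⟨-, f, hf, hyf, hxf⟩ := hy x hx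
      exact ⟨f, hf, hxf, hyf⟩
  choose! e he using hedge
  exact containsExpansionKnn_of_isEdgeChoice hF (fun x hx y hy => he x hx y hy)
    (Set.disjoint_left.2 fun x hx hxY => (shadowGraph F).irrefl (hxY x hx)) hX hY

end Expansion

lemma not_isProperColoring_nat {V : Type u} {E : Set (Set V)}
    (hChr : ℵ₁ ≤ chromaticNumber V E) (f : V → ℕ) : ¬ IsProperColoring E f := fun hf => by
  have hle : chromaticNumber V E ≤ ℵ₀ := by
    refine csInf_le' ⟨ULift.{u} ℕ, fun v => ⟨f v⟩, by simp, fun e he => ?_⟩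
    obtain ⟨x, hx, y, hy, hxy⟩ := hf e he
    exact ⟨x, hx, y, hy, fun h => hxy (congrArg ULift.down h)⟩
  exact aleph0_lt_aleph_one.not_ge (hChr.trans hle)

/-- In this version the edges may have different sizes, also in the copy of the expansion:
`k` is only a bound on them. -/
theorem expansion_Knn_obligatory_general (k n : ℕ) (V : Type u) (E : Set (Set V))
    (hE : ∀ e ∈ E, 2 ≤ e.ncard ∧ e.ncard ≤ k) (hChr : ℵ₁ ≤ chromaticNumber V E) :
    ContainsExpansionKnn k n E := by
  classical
  lift E to Set (Finset V) using fun e he => Set.finite_of_ncard_pos (by have := hE e he; omega)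
    with F
  have hcard : ∀ e ∈ F, 2 ≤ e.card ∧ e.card ≤ k := by simpa using hE
  let M := minimalRich F (n * n * k)
  have hM : ∀ e ∈ ((↑) '' F : Set (Set V)), ∃ T ∈ M, 2 ≤ T.card ∧ ↑T ⊆ e := by
    rintro _ ⟨e, he, rfl⟩
    obtain ⟨T, hT, hTe⟩ := exists_minimalRich_subset he (hcard e he).1
    exact ⟨T, hT, (mem_minimalRich.1 hT).prop.1, hTe⟩
  have hcolor : IsEmpty ((shadowGraph M).Coloring ℕ) :=
    ⟨fun f => not_isProperColoring_nat hChr f (isProperColoring_of_shadowGraph_coloring hM f)⟩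
  have hstar : ∀ x y, x ≠ y →
      (starVertices M {x, y}).encard ≤ ↑((n * n * k + 1) ^ k * k) := fun x y hxy => by
    have h2 := Finset.card_pair hxy
    exact encard_starVertices_minimalRich_le (fun e he => (hcard e he).2) k h2.ge (by omega)
  obtain ⟨X, hX, hXM⟩ := exists_uncountable_commonNeighborSet hcolor _
  exact containsExpansionKnn_of_isRich (fun e he => (hcard e he).2)
    (fun T hT => isRich_of_mem_minimalRich hT)
    (containsExpansionKnn_of_infinite_commonNeighborSet hstar
      (hX ▸ Nat.lt_succ_self _) (mt Set.Finite.countable hXM))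

/-- **Theorem 1.2.** For all integers `k ≥ 2` and `n ≥ 1`, the `k`-uniform expansion
`K^{(k)}_{n,n}` is obligatory: every `k`-uniform hypergraph of chromatic number at
least `ℵ₁` contains a copy of `K^{(k)}_{n,n}`. -/
theorem expansion_Knn_obligatory (k n : ℕ) (hk : 2 ≤ k) (hn : 1 ≤ n)
    (V : Type u) (E : Set (Set V)) (hUnif : ∀ e ∈ E, e.ncard = k)
    (hChr : Cardinal.aleph 1 ≤ chromaticNumber V E) :
    ContainsExpansionKnn k n E :=
  expansion_Knn_obligatory_general k n V E
    (fun e he => ⟨hk.trans_eq (hUnif e he).symm, (hUnif e he).le⟩) hChr
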